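/- Suppose the agent state {Z_t} of a POMDP is an information state, i.e., there exist r_IS : Z × A → ℝ and a transition kernel P_IS : Z × A → Δ(Z) such that E[R_t | H_t, A_t] = r_IS(σ_t(H_t), A_t) and P(Z_{t+1} | H_t, A_t) = P_IS(Z_{t+1} | σ_t(H_t), A_t) for all t. Let (Q*_IS, V*_IS) solve the Bellman equations Q*_IS(z,a) = r_IS(z,a) + γ ∑_{z'} P_IS(z'|z,a)·V*_IS(z'), V*_IS(z) = max_a Q*_IS(z,a). Then the history-dependent policy π*_t(h_t) = argmax_a Q*_IS(σ_t(h_t), a) achieves the supremum of expected discounted reward over all history-dependent policies. -/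

import Mathlib

open scoped BigOperators

section

variable {S A Y Z : Type*} [Fintype S] [Fintype A] [Fintype Y] [Fintype Z]

/-- Probability of a trajectory `(S_t,Y_t,A_t), …, (S_1,Y_1,A_1)` (listed most-recent
first) of a POMDP with initial law `ν` of `(S₁,Y₁)`, dynamics `P(s',y'|s,a)`, and a
history-dependent stochastic policy `π(a | past (y,a)-pairs, current y)`. -/
noncomputable def probTraj (ν : S × Y → ℝ) (P : S → A → S × Y → ℝ)
    (π : List (Y × A) → Y → A → ℝ) : List (S × Y × A) → ℝ
  | [] => 1
  | (s, y, a) :: rest =>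
      (match rest with
        | [] => ν (s, y)
        | (s₀, _, a₀) :: _ => P s₀ a₀ (s, y)) *
        π (rest.map fun u => (u.2.1, u.2.2)) y a * probTraj ν P π rest

/-- A valid (history-dependent) stochastic policy. -/
def validPol (π : List (Y × A) → Y → A → ℝ) : Prop :=
  ∀ h y, (∀ a, 0 ≤ π h y a) ∧ ∑ a, π h y a = 1

/-- Expected reward at time `t+1` (trajectories are indexed chronologically by `Fin (t+1)`
and reversed into the most-recent-first convention). -/
noncomputable def expRtime (ν : S × Y → ℝ) (P : S → A → S × Y → ℝ) (r : S → A → ℝ)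
    (π : List (Y × A) → Y → A → ℝ) (t : ℕ) : ℝ :=
  ∑ v : Fin (t + 1) → S × Y × A,
    probTraj ν P π (List.ofFn v).reverse * r (v (Fin.last t)).1 (v (Fin.last t)).2.2

/-- Performance `J^π = E^π[∑_{t≥1} γ^{t−1} R_t]` of a history-dependent policy. -/
noncomputable def valJ (γ : ℝ) (ν : S × Y → ℝ) (P : S → A → S × Y → ℝ)
    (r : S → A → ℝ) (π : List (Y × A) → Y → A → ℝ) : ℝ :=
  ∑' t : ℕ, γ ^ t * expRtime ν P r π t

/-- The agent state `Z_t = σ_t(H_t)` generated by the recursive update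
`Z₁ = φ₀(Y₁)`, `Z_{t+1} = φ(Z_t, Y_{t+1}, A_t)`; the history is given as the list of
past `(y,a)` pairs (most recent first) together with the current observation. -/
def sigAgg (φ0 : Y → Z) (φ : Z → Y → A → Z) : List (Y × A) → Y → Z
  | [], y => φ0 y
  | (y', a') :: rest, y => φ (sigAgg φ0 φ rest y') y a'

/-- The full trajectory obtained by attaching a state sequence to an observation-action
history (most recent first). -/
def zipSV (w : List (Y × A)) (sv : Fin w.length → S) : List (S × Y × A) :=
  List.ofFn fun i => (sv i, (w.get i).1, (w.get i).2)

/-- Probability of observing the observation-action history `w` (most recent first). -/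
noncomputable def histProb (ν : S × Y → ℝ) (P : S → A → S × Y → ℝ)
    (π : List (Y × A) → Y → A → ℝ) (w : List (Y × A)) : ℝ :=
  ∑ sv : Fin w.length → S, probTraj ν P π (zipSV w sv)

end

/-- Sum of `F` over all lists of length `n`. -/
noncomputable def listSum {X : Type*} [Fintype X] (n : ℕ) (F : List X → ℝ) : ℝ :=
  ∑ v : Fin n → X, F (List.ofFn v)

theorem listSum_zero {X : Type*} [Fintype X] (F : List X → ℝ) : listSum 0 F = F [] := by
  simp [listSum]

theorem sum_fin_succ_arrow {X : Type*} [Fintype X] (n : ℕ) (G : (Fin (n + 1) → X) → ℝ) :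
    ∑ v, G v = ∑ x, ∑ v : Fin n → X, G (Fin.cons x v) := by
  rw [← Fintype.sum_prod_type']
  exact (Fintype.sum_equiv (Fin.consEquiv fun _ => X) _ _ fun _ => rfl).symm

theorem listSum_succ {X : Type*} [Fintype X] (n : ℕ) (F : List X → ℝ) :
    listSum (n + 1) F = ∑ x, listSum n fun l => F (x :: l) := by
  simp [listSum, sum_fin_succ_arrow, List.ofFn_succ]

theorem listSum_mono {X : Type*} [Fintype X] (n : ℕ) {F G : List X → ℝ} (h : ∀ l, F l ≤ G l) :
    listSum n F ≤ listSum n G :=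
  Finset.sum_le_sum fun _ _ => h _

theorem listSum_sum {X ι : Type*} [Fintype X] (s : Finset ι) (n : ℕ) (F : ι → List X → ℝ) :
    listSum n (fun l => ∑ i ∈ s, F i l) = ∑ i ∈ s, listSum n (F i) :=
  Finset.sum_comm

theorem listSum_succ_comm {X : Type*} [Fintype X] (n : ℕ) (F : List X → ℝ) :
    listSum (n + 1) F = listSum n fun l => ∑ x, F (x :: l) := by
  rw [listSum_succ, listSum_sum]

section

variable {S A Y Z : Type*}

/-- Conditional law of the next state-observation pair given the past trajectory. -/
def stepProb (ν : S × Y → ℝ) (P : S → A → S × Y → ℝ) : List (S × Y × A) → S × Y → ℝ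
  | [] => ν
  | (s, _, a) :: _ => P s a

/-- The observation-action history of a trajectory. -/
def obsHist (l : List (S × Y × A)) : List (Y × A) := l.map fun u => (u.2.1, u.2.2)

theorem probTraj_cons (ν : S × Y → ℝ) (P : S → A → S × Y → ℝ)
    (π : List (Y × A) → Y → A → ℝ) (s : S) (y : Y) (a : A) (l : List (S × Y × A)) :
    probTraj ν P π ((s, y, a) :: l) =
      stepProb ν P l (s, y) * π (obsHist l) y a * probTraj ν P π l := by
  cases l <;> rfl

theorem zipSV_cons (y : Y) (a : A) (w : List (Y × A)) (s : S) (sv : Fin w.length → S) :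
    zipSV ((y, a) :: w) (Fin.cons s sv : Fin (w.length + 1) → S) = (s, y, a) :: zipSV w sv := by
  simp [zipSV, List.ofFn_succ]

theorem obsHist_zipSV (w : List (Y × A)) (sv : Fin w.length → S) :
    obsHist (zipSV w sv) = w := by
  simp only [obsHist, zipSV, List.map_ofFn]
  exact List.ofFn_get w

theorem stepProb_nonneg {ν : S × Y → ℝ} (hν0 : ∀ sy, 0 ≤ ν sy)
    {P : S → A → S × Y → ℝ} (hP0 : ∀ s a sy, 0 ≤ P s a sy)
    (l : List (S × Y × A)) (sy : S × Y) : 0 ≤ stepProb ν P l sy := by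
  rcases l with _ | ⟨⟨s, y, a⟩, l⟩
  exacts [hν0 _, hP0 _ _ _]

theorem sum_stepProb [Fintype S] [Fintype Y] {ν : S × Y → ℝ} (hν1 : ∑ sy : S × Y, ν sy = 1)
    {P : S → A → S × Y → ℝ} (hP1 : ∀ s a, ∑ sy : S × Y, P s a sy = 1)
    (l : List (S × Y × A)) : ∑ sy, stepProb ν P l sy = 1 := by
  rcases l with _ | ⟨⟨s, y, a⟩, l⟩
  exacts [hν1, hP1 _ _]

theorem probTraj_nonneg [Fintype A] {ν : S × Y → ℝ} (hν0 : ∀ sy, 0 ≤ ν sy)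
    {P : S → A → S × Y → ℝ} (hP0 : ∀ s a sy, 0 ≤ P s a sy)
    {π : List (Y × A) → Y → A → ℝ} (hπ : validPol π) (l : List (S × Y × A)) :
    0 ≤ probTraj ν P π l := by
  induction l with
  | nil => exact zero_le_one
  | cons x l ih =>
    obtain ⟨s, y, a⟩ := x
    rw [probTraj_cons]
    exact mul_nonneg (mul_nonneg (stepProb_nonneg hν0 hP0 _ _) ((hπ _ _).1 _)) ih

/-- Extend a function of current state, observation, action and past history to trajectories,
with value `0` on the empty one. -/
def onTraj (f : S → Y → A → List (Y × A) → ℝ) : List (S × Y × A) → ℝ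
  | [] => 0
  | (s, y, a) :: l => f s y a (obsHist l)

theorem onTraj_zipSV (f : S → Y → A → List (Y × A) → ℝ) (y : Y) (a : A) (w : List (Y × A))
    (sv : Fin ((y, a) :: w).length → S) :
    onTraj f (zipSV ((y, a) :: w) sv) = f (sv ⟨0, by simp⟩) y a w := by
  obtain ⟨s, sv, rfl⟩ : ∃ s sv₀, sv = (Fin.cons s sv₀ : Fin (w.length + 1) → S) :=
    ⟨_, _, (Fin.cons_self_tail (α := fun _ => S) sv).symm⟩
  rw [zipSV_cons]
  simp only [onTraj, obsHist_zipSV]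
  rfl

theorem histProb_nonneg [Fintype S] [Fintype A] {ν : S × Y → ℝ} (hν0 : ∀ sy, 0 ≤ ν sy)
    {P : S → A → S × Y → ℝ} (hP0 : ∀ s a sy, 0 ≤ P s a sy)
    {π : List (Y × A) → Y → A → ℝ} (hπ : validPol π) (w : List (Y × A)) :
    0 ≤ histProb ν P π w :=
  Finset.sum_nonneg fun _ _ => probTraj_nonneg hν0 hP0 hπ _

theorem probTraj_zipSV_eq_zero [Fintype S] [Fintype A] {ν : S × Y → ℝ} (hν0 : ∀ sy, 0 ≤ ν sy)
    {P : S → A → S × Y → ℝ} (hP0 : ∀ s a sy, 0 ≤ P s a sy)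
    {π : List (Y × A) → Y → A → ℝ} (hπ : validPol π) {w : List (Y × A)}
    (h : histProb ν P π w = 0) (sv : Fin w.length → S) : probTraj ν P π (zipSV w sv) = 0 :=
  (Finset.sum_eq_zero_iff_of_nonneg fun _ _ => probTraj_nonneg hν0 hP0 hπ _).1 h sv
    (Finset.mem_univ _)

variable [Fintype S] [Fintype A] [Fintype Y] [Fintype Z]

theorem listSum_eq_sum_zipSV (n : ℕ) (F : List (S × Y × A) → ℝ) :
    listSum n F = listSum n fun w : List (Y × A) =>
      ∑ sv : Fin w.length → S, F (zipSV w sv) := by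
  induction n generalizing F with
  | zero => simp [listSum_zero, zipSV]
  | succ n ih =>
    have key : ∀ (ya : Y × A) (w : List (Y × A)),
        ∑ sv : Fin (ya :: w).length → S, F (zipSV (ya :: w) sv) =
          ∑ s, ∑ sv : Fin w.length → S, F ((s, ya.1, ya.2) :: zipSV w sv) := by
      rintro ⟨y, a⟩ w
      refine (sum_fin_succ_arrow w.length fun sv => F (zipSV ((y, a) :: w) sv)).trans ?_
      simp only [zipSV_cons]
    simp only [listSum_succ, key, listSum_sum]
    rw [Fintype.sum_prod_type, Finset.sum_comm]
    exact Finset.sum_congr rfl fun ya _ => Finset.sum_congr rfl fun s _ =>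
      ih fun l => F ((s, ya) :: l)

/-- Expectation of a function of the trajectory of length `n`. -/
noncomputable def trajExp (ν : S × Y → ℝ) (P : S → A → S × Y → ℝ)
    (π : List (Y × A) → Y → A → ℝ) (n : ℕ) (F : List (S × Y × A) → ℝ) : ℝ :=
  listSum n fun l => probTraj ν P π l * F l

theorem trajExp_succ (ν : S × Y → ℝ) (P : S → A → S × Y → ℝ)
    (π : List (Y × A) → Y → A → ℝ) (n : ℕ) (F : List (S × Y × A) → ℝ) :
    trajExp ν P π (n + 1) F = trajExp ν P π n fun l =>
      ∑ sy, stepProb ν P l sy * ∑ a, π (obsHist l) sy.2 a * F ((sy.1, sy.2, a) :: l) := by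
  simp only [trajExp]
  rw [listSum_succ_comm]
  congr 1 with l
  simp only [Fintype.sum_prod_type, probTraj_cons, Finset.mul_sum]
  refine Finset.sum_congr rfl fun s _ => Finset.sum_congr rfl fun y _ =>
    Finset.sum_congr rfl fun a _ => by ring

theorem expRtime_eq (ν : S × Y → ℝ) (P : S → A → S × Y → ℝ) (r : S → A → ℝ)
    (π : List (Y × A) → Y → A → ℝ) (t : ℕ) :
    expRtime ν P r π t = trajExp ν P π (t + 1) (onTraj fun s _ a _ => r s a) := by
  unfold expRtime trajExp listSum
  refine Fintype.sum_equiv (Equiv.arrowCongr Fin.revPerm (Equiv.refl _)) _ _ fun v => ?_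
  have h : List.ofFn (Equiv.arrowCongr Fin.revPerm (Equiv.refl (S × Y × A)) v) =
      (List.ofFn v).reverse := by
    refine List.ext_getElem (by simp) fun i h₁ h₂ => ?_
    simp only [List.getElem_ofFn, List.getElem_reverse, List.length_ofFn]
    refine congrArg v (Fin.ext ?_)
    simp [Fin.rev]
  rw [← h]
  congr 1
  rw [List.ofFn_succ]
  simp [onTraj]

theorem trajExp_mono {ν : S × Y → ℝ} (hν0 : ∀ sy, 0 ≤ ν sy)
    {P : S → A → S × Y → ℝ} (hP0 : ∀ s a sy, 0 ≤ P s a sy)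
    {π : List (Y × A) → Y → A → ℝ} (hπ : validPol π)
    (n : ℕ) {F G : List (S × Y × A) → ℝ} (h : ∀ l, F l ≤ G l) :
    trajExp ν P π n F ≤ trajExp ν P π n G :=
  listSum_mono n fun l => mul_le_mul_of_nonneg_left (h l) (probTraj_nonneg hν0 hP0 hπ l)

theorem trajExp_const {ν : S × Y → ℝ} (hν1 : ∑ sy : S × Y, ν sy = 1)
    {P : S → A → S × Y → ℝ} (hP1 : ∀ s a, ∑ sy : S × Y, P s a sy = 1)
    {π : List (Y × A) → Y → A → ℝ} (hπ : validPol π) (n : ℕ) (c : ℝ) :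
    trajExp ν P π n (fun _ => c) = c := by
  induction n with
  | zero => simp [trajExp, listSum_zero, probTraj]
  | succ n ih =>
    rw [trajExp_succ]
    simpa [← Finset.sum_mul, (hπ _ _).2, sum_stepProb hν1 hP1] using ih

end

theorem tsum_discounted_le {γ : ℝ} (hγ0 : 0 ≤ γ) (hγ1 : γ < 1) {R W : ℕ → ℝ} {M C : ℝ}
    (hR : ∀ n, |R n| ≤ M) (hW : ∀ n, |W n| ≤ C) (h : ∀ n, R n + γ * W (n + 1) ≤ W n) :
    ∑' n, γ ^ n * R n ≤ W 0 := by
  have hs : Summable fun n => γ ^ n * R n := by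
    refine Summable.of_norm_bounded ((summable_geometric_of_lt_one hγ0 hγ1).mul_right M) fun n => ?_
    rw [norm_mul, norm_pow, Real.norm_eq_abs, Real.norm_eq_abs, abs_of_nonneg hγ0]
    exact mul_le_mul_of_nonneg_left (hR n) (pow_nonneg hγ0 n)
  have h0 : Filter.Tendsto (fun n => γ ^ n * W n) Filter.atTop (nhds 0) := by
    refine squeeze_zero_norm (a := fun n => γ ^ n * C) (fun n => ?_) ?_
    · rw [norm_mul, norm_pow, Real.norm_eq_abs, Real.norm_eq_abs, abs_of_nonneg hγ0]
      exact mul_le_mul_of_nonneg_left (hW n) (pow_nonneg hγ0 n)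
    · simpa using (tendsto_pow_atTop_nhds_zero_of_lt_one hγ0 hγ1).mul_const C
  have hlim := hs.hasSum.tendsto_sum_nat.add h0
  rw [add_zero] at hlim
  refine le_of_tendsto' hlim fun n => ?_
  induction n with
  | zero => simp
  | succ n ih =>
    have := mul_le_mul_of_nonneg_left (h n) (pow_nonneg hγ0 n)
    rw [Finset.sum_range_succ, pow_succ]
    linarith

theorem tsum_discounted_eq {γ : ℝ} (hγ0 : 0 ≤ γ) (hγ1 : γ < 1) {R W : ℕ → ℝ} {M C : ℝ}
    (hR : ∀ n, |R n| ≤ M) (hW : ∀ n, |W n| ≤ C) (h : ∀ n, R n + γ * W (n + 1) = W n) :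
    ∑' n, γ ^ n * R n = W 0 := by
  refine le_antisymm (tsum_discounted_le hγ0 hγ1 hR hW fun n => (h n).le) ?_
  have := tsum_discounted_le (R := fun n => -R n) (W := fun n => -W n) hγ0 hγ1
    (by simpa using hR) (by simpa using hW) (fun n => by linarith [h n])
  simp only [mul_neg, tsum_neg] at this
  linarith

section

variable {S A Y Z : Type*} [Fintype S] [Fintype A] [Fintype Y] [Fintype Z]

theorem trajExp_succ_congr (ν : S × Y → ℝ) (P : S → A → S × Y → ℝ)
    (π : List (Y × A) → Y → A → ℝ) (n : ℕ) {F G : List (S × Y × A) → ℝ}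
    (h : ∀ x l, F (x :: l) = G (x :: l)) :
    trajExp ν P π (n + 1) F = trajExp ν P π (n + 1) G := by
  simp only [trajExp, listSum_succ, h]

theorem trajExp_add_mul (ν : S × Y → ℝ) (P : S → A → S × Y → ℝ)
    (π : List (Y × A) → Y → A → ℝ) (n : ℕ) (F G : List (S × Y × A) → ℝ) (c : ℝ) :
    trajExp ν P π n (fun l => F l + c * G l) = trajExp ν P π n F + c * trajExp ν P π n G := by
  simp only [trajExp, listSum, Finset.mul_sum, ← Finset.sum_add_distrib]
  exact Finset.sum_congr rfl fun _ _ => by ring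

theorem abs_trajExp_le {ν : S × Y → ℝ} (hν0 : ∀ sy, 0 ≤ ν sy)
    (hν1 : ∑ sy : S × Y, ν sy = 1) {P : S → A → S × Y → ℝ} (hP0 : ∀ s a sy, 0 ≤ P s a sy)
    (hP1 : ∀ s a, ∑ sy : S × Y, P s a sy = 1) {π : List (Y × A) → Y → A → ℝ} (hπ : validPol π)
    (n : ℕ) {F : List (S × Y × A) → ℝ} {C : ℝ} (h : ∀ l, |F l| ≤ C) :
    |trajExp ν P π n F| ≤ C := by
  rw [abs_le]
  constructor
  · rw [← trajExp_const hν1 hP1 hπ n (-C)]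
    exact trajExp_mono hν0 hP0 hπ n fun l => (abs_le.1 (h l)).1
  · rw [← trajExp_const hν1 hP1 hπ n C]
    exact trajExp_mono hν0 hP0 hπ n fun l => (abs_le.1 (h l)).2

/-- Expected value of `V` at the agent state reached after `n` steps. -/
noncomputable def expValue (ν : S × Y → ℝ) (P : S → A → S × Y → ℝ) (φ0 : Y → Z)
    (φ : Z → Y → A → Z) (π : List (Y × A) → Y → A → ℝ) (V : Z → ℝ) (n : ℕ) : ℝ :=
  trajExp ν P π n fun l => ∑ sy, stepProb ν P l sy * V (sigAgg φ0 φ (obsHist l) sy.2)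

theorem abs_expValue_le {ν : S × Y → ℝ} (hν0 : ∀ sy, 0 ≤ ν sy)
    (hν1 : ∑ sy : S × Y, ν sy = 1) {P : S → A → S × Y → ℝ} (hP0 : ∀ s a sy, 0 ≤ P s a sy)
    (hP1 : ∀ s a, ∑ sy : S × Y, P s a sy = 1) (φ0 : Y → Z) (φ : Z → Y → A → Z)
    {π : List (Y × A) → Y → A → ℝ} (hπ : validPol π) (V : Z → ℝ) (n : ℕ) :
    |expValue ν P φ0 φ π V n| ≤ ∑ z, |V z| := by
  refine abs_trajExp_le hν0 hν1 hP0 hP1 hπ n fun l => ?_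
  calc |∑ sy, stepProb ν P l sy * V (sigAgg φ0 φ (obsHist l) sy.2)|
      ≤ ∑ sy, |stepProb ν P l sy * V (sigAgg φ0 φ (obsHist l) sy.2)| :=
        Finset.abs_sum_le_sum_abs _ _
    _ ≤ ∑ sy, stepProb ν P l sy * ∑ z, |V z| := by
        refine Finset.sum_le_sum fun sy _ => ?_
        rw [abs_mul, abs_of_nonneg (stepProb_nonneg hν0 hP0 _ _)]
        exact mul_le_mul_of_nonneg_left
          (Finset.single_le_sum (f := fun z => |V z|) (fun z _ => abs_nonneg _)
            (Finset.mem_univ _)) (stepProb_nonneg hν0 hP0 _ _)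
    _ = ∑ z, |V z| := by rw [← Finset.sum_mul, sum_stepProb hν1 hP1, one_mul]

/-- If `F` has conditional expectation `q` given every observable history, the two have the same
expectation. -/
theorem trajExp_eq_of_hist (ν : S × Y → ℝ) (P : S → A → S × Y → ℝ)
    (π : List (Y × A) → Y → A → ℝ) (n : ℕ) {F : List (S × Y × A) → ℝ} {q : List (Y × A) → ℝ}
    (h : ∀ w, ∑ sv : Fin w.length → S, probTraj ν P π (zipSV w sv) * F (zipSV w sv) =
      histProb ν P π w * q w) :
    trajExp ν P π n F = trajExp ν P π n fun l => q (obsHist l) := by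
  simp only [trajExp]
  rw [listSum_eq_sum_zipSV, listSum_eq_sum_zipSV]
  simp only [h, obsHist_zipSV, histProb, Finset.sum_mul]

/-- Under the information-state properties, one step of reward plus discounted expected value has
the same expectation as the agent-state action value. -/
theorem expRtime_add_expValue [DecidableEq Z] {γ : ℝ} {r : S → A → ℝ}
    {ν : S × Y → ℝ} (hν0 : ∀ sy, 0 ≤ ν sy)
    {P : S → A → S × Y → ℝ} (hP0 : ∀ s a sy, 0 ≤ P s a sy)
    {φ0 : Y → Z} {φ : Z → Y → A → Z} {rIS : Z → A → ℝ} {PIS : Z → A → Z → ℝ}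
    {π : List (Y × A) → Y → A → ℝ} (hπ : validPol π)
    (hIS1 : ∀ (y : Y) (a : A) (past : List (Y × A)),
        0 < histProb ν P π ((y, a) :: past) →
        (∑ sv : Fin ((y, a) :: past).length → S,
            probTraj ν P π (zipSV ((y, a) :: past) sv) * r (sv ⟨0, by simp⟩) a) /
          histProb ν P π ((y, a) :: past) = rIS (sigAgg φ0 φ past y) a)
    (hIS2 : ∀ (y : Y) (a : A) (past : List (Y × A)) (z' : Z),
        0 < histProb ν P π ((y, a) :: past) →
        (∑ sv : Fin ((y, a) :: past).length → S, ∑ sy' : S × Y,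
            probTraj ν P π (zipSV ((y, a) :: past) sv) * P (sv ⟨0, by simp⟩) a sy' *
              (if z' = φ (sigAgg φ0 φ past y) sy'.2 a then 1 else 0)) /
          histProb ν P π ((y, a) :: past) = PIS (sigAgg φ0 φ past y) a z')
    {QIS : Z → A → ℝ} {VIS : Z → ℝ}
    (hQ : ∀ z a, QIS z a = rIS z a + γ * ∑ z' : Z, PIS z a z' * VIS z') (n : ℕ) :
    expRtime ν P r π n + γ * expValue ν P φ0 φ π VIS (n + 1) =
      trajExp ν P π n fun l => ∑ sy, stepProb ν P l sy *
        ∑ a, π (obsHist l) sy.2 a * QIS (sigAgg φ0 φ (obsHist l) sy.2) a := by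
  let q : List (Y × A) → ℝ := fun w => match w with
    | [] => 0
    | (y, a) :: p => QIS (sigAgg φ0 φ p y) a
  have h1 : expRtime ν P r π n + γ * expValue ν P φ0 φ π VIS (n + 1) =
      trajExp ν P π (n + 1) (onTraj fun s y a p => r s a +
        γ * ∑ sy', P s a sy' * VIS (φ (sigAgg φ0 φ p y) sy'.2 a)) := by
    rw [expRtime_eq, expValue, ← trajExp_add_mul]
    exact trajExp_succ_congr _ _ _ _ fun _ _ => rfl
  have h2 : trajExp ν P π (n + 1) (fun l => q (obsHist l)) =
      trajExp ν P π n fun l => ∑ sy, stepProb ν P l sy *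
        ∑ a, π (obsHist l) sy.2 a * QIS (sigAgg φ0 φ (obsHist l) sy.2) a :=
    trajExp_succ _ _ _ _ _
  rw [h1, ← h2]
  refine trajExp_eq_of_hist _ _ _ _ fun w => ?_
  rcases w with _ | ⟨⟨y, a⟩, p⟩
  · simp [q, zipSV, onTraj]
  rcases (histProb_nonneg hν0 hP0 hπ ((y, a) :: p)).eq_or_lt with h0 | hpos
  · rw [← h0, zero_mul]
    exact Finset.sum_eq_zero fun sv _ => by
      rw [probTraj_zipSV_eq_zero hν0 hP0 hπ h0.symm, zero_mul]
  have e1 := hIS1 y a p hpos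
  rw [div_eq_iff hpos.ne'] at e1
  have e2 : ∑ sv : Fin ((y, a) :: p).length → S, probTraj ν P π (zipSV ((y, a) :: p) sv) *
      ∑ sy', P (sv ⟨0, by simp⟩) a sy' * VIS (φ (sigAgg φ0 φ p y) sy'.2 a) =
      (∑ z', PIS (sigAgg φ0 φ p y) a z' * VIS z') * histProb ν P π ((y, a) :: p) := by
    rw [Finset.sum_mul]
    have e3 : ∀ z', PIS (sigAgg φ0 φ p y) a z' * VIS z' * histProb ν P π ((y, a) :: p) =
        ∑ sv : Fin ((y, a) :: p).length → S, ∑ sy' : S × Y,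
          probTraj ν P π (zipSV ((y, a) :: p) sv) * P (sv ⟨0, by simp⟩) a sy' *
            (if z' = φ (sigAgg φ0 φ p y) sy'.2 a then 1 else 0) * VIS z' := by
      intro z'
      have e := hIS2 y a p z' hpos
      rw [div_eq_iff hpos.ne'] at e
      simp only [← Finset.sum_mul, e]
      ring
    simp only [e3]
    rw [Finset.sum_comm]
    refine Finset.sum_congr rfl fun sv _ => ?_
    rw [Finset.sum_comm, Finset.mul_sum]
    refine Finset.sum_congr rfl fun sy' _ => ?_
    simp [mul_assoc]
  simp only [onTraj_zipSV, mul_add, Finset.sum_add_distrib, e1]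
  simp only [q, hQ, mul_left_comm _ γ, ← Finset.mul_sum, e2]
  ring

end

section

variable {S A Y Z : Type*} [Fintype S] [Fintype A] [Fintype Y] [Fintype Z]

/-- **Information-state based dynamic program.** If the agent state is an information
state — (P1): sufficient for performance evaluation, and (P2): sufficient for predicting
itself (both stated via conditional probabilities under every valid policy) — then the
history-dependent policy obtained from a greedy solution of the agent-state Bellman
equations achieves the supremum of the expected discounted reward over all
history-dependent policies. -/
theorem stmt_13 [DecidableEq A] [DecidableEq Z] [Nonempty A]
    (γ : ℝ) (hγ0 : 0 < γ) (hγ1 : γ < 1)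
    (Rmax : ℝ) (r : S → A → ℝ) (hr : ∀ s a, r s a ∈ Set.Icc (0 : ℝ) Rmax)
    (ν : S × Y → ℝ) (hν0 : ∀ sy, 0 ≤ ν sy) (hν1 : ∑ sy : S × Y, ν sy = 1)
    (P : S → A → S × Y → ℝ) (hP0 : ∀ s a sy, 0 ≤ P s a sy)
    (hP1 : ∀ s a, ∑ sy : S × Y, P s a sy = 1)
    (φ0 : Y → Z) (φ : Z → Y → A → Z)
    (rIS : Z → A → ℝ) (PIS : Z → A → Z → ℝ)
    -- (P1): sufficient for performance evaluation
    (hIS1 : ∀ π : List (Y × A) → Y → A → ℝ, validPol π →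
      ∀ (y : Y) (a : A) (past : List (Y × A)),
        0 < histProb ν P π ((y, a) :: past) →
        (∑ sv : Fin ((y, a) :: past).length → S,
            probTraj ν P π (zipSV ((y, a) :: past) sv) * r (sv ⟨0, by simp⟩) a) /
          histProb ν P π ((y, a) :: past) = rIS (sigAgg φ0 φ past y) a)
    -- (P2): sufficient for predicting itself
    (hIS2 : ∀ π : List (Y × A) → Y → A → ℝ, validPol π →
      ∀ (y : Y) (a : A) (past : List (Y × A)) (z' : Z),
        0 < histProb ν P π ((y, a) :: past) →
        (∑ sv : Fin ((y, a) :: past).length → S, ∑ sy' : S × Y,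
            probTraj ν P π (zipSV ((y, a) :: past) sv) * P (sv ⟨0, by simp⟩) a sy' *
              (if z' = φ (sigAgg φ0 φ past y) sy'.2 a then 1 else 0)) /
          histProb ν P π ((y, a) :: past) = PIS (sigAgg φ0 φ past y) a z')
    -- the agent-state Bellman equations and a greedy selector
    (QIS : Z → A → ℝ) (VIS : Z → ℝ)
    (hQ : ∀ z a, QIS z a = rIS z a + γ * ∑ z' : Z, PIS z a z' * VIS z')
    (hV : ∀ z, VIS z = ⨆ a, QIS z a)
    (g : Z → A) (hg : ∀ z, QIS z (g z) = VIS z) :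
    valJ γ ν P r (fun past y a => if a = g (sigAgg φ0 φ past y) then 1 else 0) =
      ⨆ π : {π : List (Y × A) → Y → A → ℝ // validPol π}, valJ γ ν P r π.1 := by
  set πg : List (Y × A) → Y → A → ℝ :=
    fun past y a => if a = g (sigAgg φ0 φ past y) then 1 else 0 with hπg
  have hg_valid : validPol πg := fun h y =>
    ⟨fun a => by simp only [hπg]; split_ifs <;> norm_num, by simp [hπg]⟩
  have hR : ∀ π : List (Y × A) → Y → A → ℝ, validPol π → ∀ n,
      |expRtime ν P r π n| ≤ |Rmax| := by
    intro π hπ n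
    rw [expRtime_eq]
    refine abs_trajExp_le hν0 hν1 hP0 hP1 hπ _ fun l => ?_
    rcases l with _ | ⟨⟨s, y, a⟩, l⟩
    · simp [onTraj]
    · exact abs_le_abs_of_nonneg (hr s a).1 (hr s a).2
  have hle : ∀ π : List (Y × A) → Y → A → ℝ, validPol π →
      valJ γ ν P r π ≤ expValue ν P φ0 φ π VIS 0 := by
    intro π hπ
    refine tsum_discounted_le hγ0.le hγ1 (hR π hπ)
      (abs_expValue_le hν0 hν1 hP0 hP1 φ0 φ hπ VIS) fun n => ?_
    rw [expRtime_add_expValue hν0 hP0 hπ (hIS1 π hπ) (hIS2 π hπ) hQ]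
    refine trajExp_mono hν0 hP0 hπ n fun l => Finset.sum_le_sum fun sy _ =>
      mul_le_mul_of_nonneg_left ?_ (stepProb_nonneg hν0 hP0 _ _)
    calc ∑ a, π (obsHist l) sy.2 a * QIS (sigAgg φ0 φ (obsHist l) sy.2) a
        ≤ ∑ a, π (obsHist l) sy.2 a * VIS (sigAgg φ0 φ (obsHist l) sy.2) := by
          refine Finset.sum_le_sum fun a _ => mul_le_mul_of_nonneg_left ?_ ((hπ _ _).1 a)
          rw [hV]
          exact le_ciSup (Set.finite_range _).bddAbove a
      _ = VIS (sigAgg φ0 φ (obsHist l) sy.2) := by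
          rw [← Finset.sum_mul, (hπ _ _).2, one_mul]
  have heq : valJ γ ν P r πg = expValue ν P φ0 φ πg VIS 0 := by
    refine tsum_discounted_eq hγ0.le hγ1 (hR πg hg_valid)
      (abs_expValue_le hν0 hν1 hP0 hP1 φ0 φ hg_valid VIS) fun n => ?_
    rw [expRtime_add_expValue hν0 hP0 hg_valid (hIS1 πg hg_valid) (hIS2 πg hg_valid) hQ]
    simp [expValue, hπg, hg]
  have hzero : ∀ π : List (Y × A) → Y → A → ℝ,
      expValue ν P φ0 φ π VIS 0 = expValue ν P φ0 φ πg VIS 0 := fun π => by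
    simp [expValue, trajExp, listSum_zero, probTraj]
  have hub : ∀ π : {π : List (Y × A) → Y → A → ℝ // validPol π},
      valJ γ ν P r π.1 ≤ valJ γ ν P r πg := fun π =>
    (hle π.1 π.2).trans ((hzero π.1).trans heq.symm).le
  have : Nonempty {π : List (Y × A) → Y → A → ℝ // validPol π} := ⟨⟨πg, hg_valid⟩⟩
  exact le_antisymm (le_ciSup (f := fun π : {π : List (Y × A) → Y → A → ℝ // validPol π} =>
    valJ γ ν P r π.1) ⟨_, Set.forall_mem_range.2 hub⟩ ⟨πg, hg_valid⟩) (ciSup_le hub)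

end
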